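/- Let F, G be real 3×3 matrices with positive determinant such that C := G^{-T} F^T F G^{-1} ≠ I, and suppose C has eigenvalues λ₁ ≤ 1, λ₂ = 1, λ₃ ≥ 1 (hence λ₁ < λ₃) with corresponding orthonormal eigenvectors û₁, û₂, û₃. For each κ ∈ {+1, −1} and any ρ ≠ 0, define a := ρ( √(λ₃(1−λ₁)/(λ₃−λ₁)) û₁ + κ √(λ₁(λ₃−1)/(λ₃−λ₁)) û₃ ) and n̂ := ((√λ₃ − √λ₁)/(ρ√(λ₃−λ₁))) ( −√(1−λ₁) G^T û₁ + κ √(λ₃−1) G^T û₃ ). Then there exists Q ∈ SO(3) such that Q F − G = a ⊗ n̂; moreover these two choices κ = ±1 give the two solutions of this equation (Ball–James). -/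

import Mathlib

open Matrix

noncomputable section

abbrev V3 : Type := Fin 3 → ℝ
abbrev M3 : Type := Matrix (Fin 3) (Fin 3) ℝ

/-- `Q` is a rotation matrix: `Q ∈ SO(3)`. -/
def SO3 (Q : M3) : Prop := Q.transpose * Q = 1 ∧ Q.det = 1

/-- Rank-one matrix `a ⊗ n` with entries `aᵢ nⱼ`. -/
def outer (a n : V3) : M3 := Matrix.vecMulVec a n

/-- The shear vector of the Ball–James solution. -/
def aSol (l1 l3 κ ρ : ℝ) (u1 u3 : V3) : V3 :=
  ρ • (Real.sqrt (l3 * (1 - l1) / (l3 - l1)) • u1 +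
       (κ * Real.sqrt (l1 * (l3 - 1) / (l3 - l1))) • u3)

/-- The interface normal of the Ball–James solution. -/
def nSol (l1 l3 κ ρ : ℝ) (G : M3) (u1 u3 : V3) : V3 :=
  ((Real.sqrt l3 - Real.sqrt l1) / (ρ * Real.sqrt (l3 - l1))) •
    ((-(Real.sqrt (1 - l1))) • (G.transpose.mulVec u1) +
     (κ * Real.sqrt (l3 - 1)) • (G.transpose.mulVec u3))

theorem eq_sum_dotProduct_smul_of_orthonormal {u1 u2 u3 : V3}
    (h11 : u1 ⬝ᵥ u1 = 1) (h22 : u2 ⬝ᵥ u2 = 1) (h33 : u3 ⬝ᵥ u3 = 1)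
    (h12 : u1 ⬝ᵥ u2 = 0) (h13 : u1 ⬝ᵥ u3 = 0) (h23 : u2 ⬝ᵥ u3 = 0) (v : V3) :
    v = (u1 ⬝ᵥ v) • u1 + (u2 ⬝ᵥ v) • u2 + (u3 ⬝ᵥ v) • u3 := by
  have hU : (Matrix.of ![u1, u2, u3]) * (Matrix.of ![u1, u2, u3])ᵀ = (1 : M3) := by
    ext i j
    have hij : ((Matrix.of ![u1, u2, u3]) * (Matrix.of ![u1, u2, u3])ᵀ : M3) i j
        = (![u1, u2, u3] i) ⬝ᵥ (![u1, u2, u3] j) := rfl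
    rw [hij]
    fin_cases i <;> fin_cases j <;>
      simp [h11, h22, h33, h12, h13, h23, dotProduct_comm u2 u1, dotProduct_comm u3 u1,
        dotProduct_comm u3 u2]
  have hv : (Matrix.of ![u1, u2, u3])ᵀ *ᵥ ((Matrix.of ![u1, u2, u3]) *ᵥ v) = v := by
    rw [mulVec_mulVec, mul_eq_one_comm.mp hU, one_mulVec]
  conv_lhs => rw [← hv]
  ext i
  simp [mulVec, dotProduct, Fin.sum_univ_three]
  ring

theorem eq_of_mulVec_eq_of_orthonormal {u1 u2 u3 : V3}
    (h11 : u1 ⬝ᵥ u1 = 1) (h22 : u2 ⬝ᵥ u2 = 1) (h33 : u3 ⬝ᵥ u3 = 1)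
    (h12 : u1 ⬝ᵥ u2 = 0) (h13 : u1 ⬝ᵥ u3 = 0) (h23 : u2 ⬝ᵥ u3 = 0) {A B : M3}
    (h1 : A *ᵥ u1 = B *ᵥ u1) (h2 : A *ᵥ u2 = B *ᵥ u2) (h3 : A *ᵥ u3 = B *ᵥ u3) : A = B := by
  refine Matrix.ext_of_mulVec_single fun i => ?_
  rw [eq_sum_dotProduct_smul_of_orthonormal h11 h22 h33 h12 h13 h23 (Pi.single i 1)]
  simp only [mulVec_add, mulVec_smul, h1, h2, h3]

theorem transpose_mul_self_one_add_vecMulVec_mulVec (a m v : V3) :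
    ((1 + vecMulVec a m)ᵀ * (1 + vecMulVec a m)) *ᵥ v =
      v + (m ⬝ᵥ v) • a + (a ⬝ᵥ v + (a ⬝ᵥ a) * (m ⬝ᵥ v)) • m := by
  ext i
  simp only [← mulVec_mulVec, transpose_add, transpose_one, transpose_vecMulVec, add_mulVec,
    one_mulVec, vecMulVec_mulVec, dotProduct_add, dotProduct_smul, Pi.add_apply, Pi.smul_apply,
    smul_eq_mul, op_smul_eq_smul]
  ring

theorem det_one_add_vecMulVec_eq (a m : V3) :
    (1 + vecMulVec a m : M3).det = 1 + a ⬝ᵥ m := by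
  rw [Matrix.det_fin_three]
  simp [vecMulVec_apply, dotProduct, Fin.sum_univ_three]
  ring

/-- A sign choice: `t z1 = ± s b1` and `s z3 = ± t b3` hold with plus signs if `z1 z3 = b1 b3` and
`(z1, z3)` has positive inner product with `(b1, b3)`. -/
theorem eq_mul_of_sq_eq_of_inner_pos {s t b1 b3 z1 z3 : ℝ} (hs : 0 < s) (ht : 0 < t)
    (h1 : (t * z1) ^ 2 = (s * b1) ^ 2) (h3 : (s * z3) ^ 2 = (t * b3) ^ 2)
    (hz : z1 * z3 = b1 * b3) (hpos : 0 < z1 * b1 + z3 * b3) :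
    t * z1 = s * b1 ∧ s * z3 = t * b3 := by
  rcases sq_eq_sq_iff_eq_or_eq_neg.mp h1 with e1 | e1 <;>
    rcases sq_eq_sq_iff_eq_or_eq_neg.mp h3 with e3 | e3
  · exact ⟨e1, e3⟩
  · have hb : b1 * b3 = 0 := by
      have : (s * t) * (b1 * b3) = -((s * t) * (b1 * b3)) := by
        linear_combination (-s * t) * hz + s * z3 * e1 + s * b1 * e3
      have hst := mul_pos hs ht
      nlinarith
    rcases mul_eq_zero.mp hb with hb | hb
    · exfalso
      subst hb
      have : 0 < s * (z3 * b3) := by nlinarith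
      nlinarith [sq_nonneg b3]
    · subst hb
      exact ⟨e1, by linarith⟩
  · have hb : b1 * b3 = 0 := by
      have : (s * t) * (b1 * b3) = -((s * t) * (b1 * b3)) := by
        linear_combination (-s * t) * hz + s * z3 * e1 - s * b1 * e3
      have hst := mul_pos hs ht
      nlinarith
    rcases mul_eq_zero.mp hb with hb | hb
    · subst hb
      exact ⟨by linarith, e3⟩
    · exfalso
      subst hb
      have : 0 < t * (z1 * b1) := by nlinarith
      nlinarith [sq_nonneg b1]
  · exfalso
    have hst := mul_pos hs ht
    have : s * t * (z1 * b1 + z3 * b3) = -(s ^ 2 * b1 ^ 2 + t ^ 2 * b3 ^ 2) := by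
      linear_combination s * b1 * e1 + t * b3 * e3
    nlinarith [mul_pos hst hpos, sq_nonneg (s * b1), sq_nonneg (t * b3)]

/-- Coordinates, in an orthonormal eigenbasis, of the solutions of
`m ⊗ a + a ⊗ m + |a|² m ⊗ m = diag (s² - 1, 0, t² - 1)` with `1 + a ⬝ m > 0`. -/
theorem coordinates_of_twin {s t p q d a1 a2 a3 m1 m2 m3 E : ℝ}
    (hs : 0 < s) (ht : 0 < t) (hst : s < t) (hd : 0 < d)
    (hp : p ^ 2 = 1 - s ^ 2) (hq : q ^ 2 = t ^ 2 - 1) (hd2 : d ^ 2 = t ^ 2 - s ^ 2)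
    (hE : E = a1 ^ 2 + a2 ^ 2 + a3 ^ 2)
    (e11 : 2 * a1 * m1 + E * m1 ^ 2 = s ^ 2 - 1) (e22 : 2 * a2 * m2 + E * m2 ^ 2 = 0)
    (e33 : 2 * a3 * m3 + E * m3 ^ 2 = t ^ 2 - 1)
    (e12 : a1 * m2 + a2 * m1 + E * m1 * m2 = 0) (e13 : a1 * m3 + a3 * m1 + E * m1 * m3 = 0)
    (e23 : a2 * m3 + a3 * m2 + E * m2 * m3 = 0)
    (hpos : 0 < 1 + (a1 * m1 + a2 * m2 + a3 * m3)) :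
    a2 = 0 ∧ m2 = 0 ∧ ∃ κ ρ : ℝ, (κ = 1 ∨ κ = -1) ∧ ρ ≠ 0 ∧
      a1 = ρ * (t * p / d) ∧ a3 = ρ * (κ * (s * q / d)) ∧
      m1 = (t - s) / (ρ * d) * -p ∧ m3 = (t - s) / (ρ * d) * (κ * q) := by
  have hlt : s ^ 2 < t ^ 2 := by nlinarith
  have hm2 : m2 = 0 := by
    by_contra hm
    have f2 : 2 * a2 + E * m2 = 0 := by
      apply mul_left_cancel₀ hm
      linear_combination e22
    have f1 : 2 * a1 + E * m1 = 0 := by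
      apply mul_left_cancel₀ hm
      linear_combination 2 * e12 - m1 * f2
    have f3 : 2 * a3 + E * m3 = 0 := by
      apply mul_left_cancel₀ hm
      linear_combination 2 * e23 - m3 * f2
    have g1 : s ^ 2 - 1 = 0 := by linear_combination m1 * f1 - e11
    have g3 : t ^ 2 - 1 = 0 := by linear_combination m3 * f3 - e33
    linarith
  subst hm2
  have ha2 : a2 = 0 := by
    by_contra ha
    have g1 : m1 = 0 := by
      apply mul_left_cancel₀ ha
      linear_combination e12
    have g3 : m3 = 0 := by
      apply mul_left_cancel₀ ha
      linear_combination e23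
    subst g1 g3
    nlinarith
  subst ha2
  have hE0 : 0 < E := by
    rcases (show 0 ≤ E by rw [hE]; positivity).eq_or_lt with h | h
    · have g1 : a1 = 0 := by nlinarith [sq_nonneg a1, sq_nonneg a3]
      have g3 : a3 = 0 := by nlinarith [sq_nonneg a1, sq_nonneg a3]
      rw [← h, g1] at e11
      rw [← h, g3] at e33
      nlinarith
    · exact h
  obtain ⟨e, he, hee⟩ : ∃ e : ℝ, 0 < e ∧ E = e ^ 2 :=
    ⟨√E, Real.sqrt_pos.mpr hE0, (Real.sq_sqrt hE0.le).symm⟩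
  obtain ⟨b1, rfl⟩ : ∃ b, a1 = e * b := ⟨a1 / e, by field_simp⟩
  obtain ⟨b3, rfl⟩ : ∃ b, a3 = e * b := ⟨a3 / e, by field_simp⟩
  obtain ⟨z1, rfl⟩ : ∃ z, m1 = (z - b1) / e := ⟨e * m1 + b1, by field_simp; ring⟩
  obtain ⟨z3, rfl⟩ : ∃ z, m3 = (z - b3) / e := ⟨e * m3 + b3, by field_simp; ring⟩
  subst hee
  have hb : b1 ^ 2 + b3 ^ 2 = 1 := by
    apply mul_left_cancel₀ (pow_ne_zero 2 he.ne')
    linear_combination -hE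
  have k1 : z1 ^ 2 - b1 ^ 2 = s ^ 2 - 1 := by
    rw [← e11]; field_simp; ring
  have k3 : z3 ^ 2 - b3 ^ 2 = t ^ 2 - 1 := by
    rw [← e33]; field_simp; ring
  have k13 : z1 * z3 = b1 * b3 := by
    field_simp at e13
    linarith
  have kpos : 0 < z1 * b1 + z3 * b3 := by
    have : 1 + (e * b1 * ((z1 - b1) / e) + 0 * 0 + e * b3 * ((z3 - b3) / e))
        = z1 * b1 + z3 * b3 := by
      field_simp
      linear_combination -hb
    rwa [this] at hpos
  have hb1 : d ^ 2 * b1 ^ 2 = t ^ 2 * p ^ 2 := by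
    have hz : z1 ^ 2 * z3 ^ 2 = b1 ^ 2 * b3 ^ 2 := by
      linear_combination (z1 * z3 + b1 * b3) * k13
    have hz1 : z1 ^ 2 = b1 ^ 2 + s ^ 2 - 1 := by linarith
    have hz3 : z3 ^ 2 = t ^ 2 - b1 ^ 2 := by linarith
    have hb3 : b3 ^ 2 = 1 - b1 ^ 2 := by linarith
    rw [hz1, hz3, hb3] at hz
    rw [hd2, hp]
    linear_combination hz
  have hb3 : d ^ 2 * b3 ^ 2 = s ^ 2 * q ^ 2 := by
    rw [hp] at hb1
    rw [hq]
    linear_combination d ^ 2 * hb - hb1 + hd2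
  have hd0 : d ^ 2 ≠ 0 := pow_ne_zero 2 hd.ne'
  obtain ⟨r1, r3⟩ : t * z1 = s * b1 ∧ s * z3 = t * b3 := by
    refine eq_mul_of_sq_eq_of_inner_pos hs ht ?_ ?_ k13 kpos
    · apply mul_left_cancel₀ hd0
      rw [hp] at hb1
      linear_combination d ^ 2 * t ^ 2 * k1 + (t ^ 2 - s ^ 2) * hb1 + t ^ 2 * (s ^ 2 - 1) * hd2
    · apply mul_left_cancel₀ hd0
      rw [hq] at hb3
      linear_combination d ^ 2 * s ^ 2 * k3 + (s ^ 2 - t ^ 2) * hb3 + s ^ 2 * (t ^ 2 - 1) * hd2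
  obtain ⟨σ, hσ, hbσ⟩ : ∃ σ : ℝ, σ ^ 2 = 1 ∧ d * b1 = σ * (t * p) := by
    have : (d * b1) ^ 2 = (t * p) ^ 2 := by linear_combination hb1
    rcases sq_eq_sq_iff_eq_or_eq_neg.mp this with h | h
    · exact ⟨1, by norm_num, by linarith⟩
    · exact ⟨-1, by norm_num, by linarith⟩
  obtain ⟨τ, hτ, hbτ⟩ : ∃ τ : ℝ, τ ^ 2 = 1 ∧ d * b3 = τ * (s * q) := by
    have : (d * b3) ^ 2 = (s * q) ^ 2 := by linear_combination hb3
    rcases sq_eq_sq_iff_eq_or_eq_neg.mp this with h | h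
    · exact ⟨1, by norm_num, by linarith⟩
    · exact ⟨-1, by norm_num, by linarith⟩
  have hσ0 : σ ≠ 0 := by
    rintro rfl
    norm_num at hσ
  have hz1 : d * (z1 - b1) = -σ * (t - s) * p := by
    apply mul_left_cancel₀ ht.ne'
    linear_combination d * r1 + (s - t) * hbσ
  have hz3 : d * (z3 - b3) = τ * (t - s) * q := by
    apply mul_left_cancel₀ hs.ne'
    linear_combination d * r3 + (t - s) * hbτ
  refine ⟨rfl, rfl, σ * τ, e * σ, ?_, mul_ne_zero he.ne' hσ0, ?_, ?_, ?_, ?_⟩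
  · exact sq_eq_one_iff.mp (by rw [mul_pow, hσ, hτ, one_mul])
  · field_simp
    linear_combination hbσ
  · field_simp
    linear_combination hbτ - τ * s * q * hσ
  · field_simp
    linear_combination σ * hz1 - (t - s) * p * hσ
  · field_simp
    linear_combination hz3

theorem aSol_eq {l1 l3 : ℝ} (h0 : 0 ≤ l1) (h1 : l1 ≤ 1) (h3 : 1 ≤ l3) (κ ρ : ℝ) (u1 u3 : V3) :
    aSol l1 l3 κ ρ u1 u3 = (ρ * (√l3 * √(1 - l1) / √(l3 - l1))) • u1 +
      (ρ * (κ * (√l1 * √(l3 - 1) / √(l3 - l1)))) • u3 := by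
  rw [aSol, Real.sqrt_div (by nlinarith), Real.sqrt_div (by nlinarith),
    Real.sqrt_mul (by linarith), Real.sqrt_mul h0, smul_add, smul_smul, smul_smul]

theorem nSol_eq (l1 l3 κ ρ : ℝ) (G : M3) (u1 u3 : V3) :
    nSol l1 l3 κ ρ G u1 u3 = Gᵀ *ᵥ (((√l3 - √l1) / (ρ * √(l3 - l1)) * -√(1 - l1)) • u1 +
      ((√l3 - √l1) / (ρ * √(l3 - l1)) * (κ * √(l3 - 1))) • u3) := by
  rw [nSol, mulVec_add, mulVec_smul, mulVec_smul, smul_add, smul_smul, smul_smul]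

theorem eigenvalue_pos_of_transpose_mul_self {H : M3} (hH : H.det ≠ 0) {l : ℝ} {u : V3}
    (hu : u ⬝ᵥ u = 1) (h : (Hᵀ * H) *ᵥ u = l • u) : 0 < l := by
  have hl : (H *ᵥ u) ⬝ᵥ (H *ᵥ u) = l := by
    rw [dotProduct_mulVec, ← mulVec_transpose, mulVec_mulVec, h, smul_dotProduct, hu, smul_eq_mul,
      mul_one]
  have hne : H *ᵥ u ≠ 0 := by
    intro h0
    have hu0 : u = 0 := mulVec_injective_of_det_ne_zero hH (by rw [h0, mulVec_zero])
    simp [hu0] at hu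
  rw [← hl]
  refine lt_of_le_of_ne ?_ fun h0 => hne (dotProduct_self_eq_zero.mp h0.symm)
  exact Finset.sum_nonneg fun i _ => mul_self_nonneg _

/-- A matrix `B` of positive determinant with the same Gram matrix as `F` is `Q * F` for a
rotation `Q`. -/
theorem exists_SO3_mul_eq {F B : M3} (hF : 0 < F.det) (hB : 0 < B.det) (h : Bᵀ * B = Fᵀ * F) :
    ∃ Q : M3, SO3 Q ∧ Q * F = B := by
  have hFu : IsUnit F.det := hF.ne'.isUnit
  have hQF : B * F⁻¹ * F = B := nonsing_inv_mul_cancel_right _ _ hFu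
  have hQ : (B * F⁻¹)ᵀ * (B * F⁻¹) = 1 := by
    rw [transpose_mul, mul_assoc, ← mul_assoc Bᵀ, h, mul_assoc, mul_nonsing_inv _ hFu, mul_one,
      ← transpose_mul, mul_nonsing_inv _ hFu, transpose_one]
  refine ⟨B * F⁻¹, ⟨hQ, ?_⟩, hQF⟩
  have hsq : (B * F⁻¹).det ^ 2 = 1 := by
    have := congrArg det hQ
    rwa [det_mul, det_transpose, det_one, ← sq] at this
  have hdet : (B * F⁻¹).det * F.det = B.det := by rw [← det_mul, hQF]
  rcases sq_eq_one_iff.mp hsq with h1 | h1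
  · exact h1
  · rw [h1] at hdet
    linarith

/-- **Ball–James.** If `C = G⁻ᵀ Fᵀ F G⁻¹ ≠ I` has eigenvalues `λ₁ ≤ 1 = λ₂ ≤ λ₃`
(with `λ₁ < λ₃`) and orthonormal eigenvectors `û₁, û₂, û₃`, then for each
`κ = ±1` and `ρ ≠ 0` the pair `(a, n̂)` given by the formulas solves
`Q F − G = a ⊗ n̂` for some `Q ∈ SO(3)`; and these give the two solutions. -/
theorem ball_james
    (F G : M3) (hF : 0 < F.det) (hG : 0 < G.det)
    (C : M3) (hC : C = (G⁻¹).transpose * (F.transpose * F) * G⁻¹) (hCne : C ≠ 1)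
    (l1 l3 : ℝ) (hl1 : l1 ≤ 1) (hl3 : 1 ≤ l3) (hl13 : l1 < l3)
    (u1 u2 u3 : V3)
    (hCu1 : C.mulVec u1 = l1 • u1) (hCu2 : C.mulVec u2 = u2)
    (hCu3 : C.mulVec u3 = l3 • u3)
    (h11 : u1 ⬝ᵥ u1 = 1) (h22 : u2 ⬝ᵥ u2 = 1) (h33 : u3 ⬝ᵥ u3 = 1)
    (h12 : u1 ⬝ᵥ u2 = 0) (h13 : u1 ⬝ᵥ u3 = 0) (h23 : u2 ⬝ᵥ u3 = 0) :
    (∀ κ ρ : ℝ, (κ = 1 ∨ κ = -1) → ρ ≠ 0 →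
      ∃ Q : M3, SO3 Q ∧
        Q * F - G = outer (aSol l1 l3 κ ρ u1 u3) (nSol l1 l3 κ ρ G u1 u3)) ∧
    (∀ (Q : M3) (a n : V3), SO3 Q → Q * F - G = outer a n →
      ∃ κ ρ : ℝ, (κ = 1 ∨ κ = -1) ∧ ρ ≠ 0 ∧
        a = aSol l1 l3 κ ρ u1 u3 ∧ n = nSol l1 l3 κ ρ G u1 u3) := by
  have hGu : IsUnit G.det := hG.ne'.isUnit
  have hCH : C = (F * G⁻¹)ᵀ * (F * G⁻¹) := by
    rw [hC, transpose_mul]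
    simp only [mul_assoc]
  have hGCG : Gᵀ * C * G = Fᵀ * F := by
    have hFG : F * G⁻¹ * G = F := nonsing_inv_mul_cancel_right _ _ hGu
    calc Gᵀ * C * G = (F * G⁻¹ * G)ᵀ * (F * G⁻¹ * G) := by
          rw [hCH, transpose_mul (F * G⁻¹) G]
          simp only [mul_assoc]
      _ = Fᵀ * F := by rw [hFG]
  have hHdet : (F * G⁻¹).det ≠ 0 := by
    rw [det_mul, det_nonsing_inv, Ring.inverse_eq_inv']
    exact mul_ne_zero hF.ne' (inv_ne_zero hG.ne')
  have hl1pos : 0 < l1 := eigenvalue_pos_of_transpose_mul_self hHdet h11 (hCH ▸ hCu1)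
  have hs : 0 < √l1 := Real.sqrt_pos.mpr hl1pos
  have ht : 0 < √l3 := Real.sqrt_pos.mpr (by linarith)
  have hst : √l1 < √l3 := Real.sqrt_lt_sqrt hl1pos.le hl13
  have hd : 0 < √(l3 - l1) := Real.sqrt_pos.mpr (by linarith)
  have hs2 : √l1 ^ 2 = l1 := Real.sq_sqrt hl1pos.le
  have ht2 : √l3 ^ 2 = l3 := Real.sq_sqrt (by linarith)
  have hp2 : √(1 - l1) ^ 2 = 1 - √l1 ^ 2 := by rw [hs2, Real.sq_sqrt (by linarith)]
  have hq2 : √(l3 - 1) ^ 2 = √l3 ^ 2 - 1 := by rw [ht2, Real.sq_sqrt (by linarith)]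
  have hd2 : √(l3 - l1) ^ 2 = √l3 ^ 2 - √l1 ^ 2 := by
    rw [hs2, ht2, Real.sq_sqrt (by linarith)]
  have h21 : u2 ⬝ᵥ u1 = 0 := by rw [dotProduct_comm, h12]
  have h31 : u3 ⬝ᵥ u1 = 0 := by rw [dotProduct_comm, h13]
  have h32 : u3 ⬝ᵥ u2 = 0 := by rw [dotProduct_comm, h23]
  have hadd (a m : V3) : G + outer a (Gᵀ *ᵥ m) = (1 + vecMulVec a m) * G := by
    rw [outer, add_mul, one_mul, vecMulVec_mul, mulVec_transpose]
  constructor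
  · intro κ ρ hκ hρ
    have hκ2 : κ ^ 2 = 1 := sq_eq_one_iff.mpr hκ
    rw [aSol_eq hl1pos.le hl1 hl3, nSol_eq]
    generalize √l1 = s at *
    generalize √l3 = t at *
    generalize √(1 - l1) = p at *
    generalize √(l3 - 1) = q at *
    generalize √(l3 - l1) = d at *
    subst hs2 ht2
    set a : V3 := (ρ * (t * p / d)) • u1 + (ρ * (κ * (s * q / d))) • u3 with ha
    set m : V3 := ((t - s) / (ρ * d) * -p) • u1 + ((t - s) / (ρ * d) * (κ * q)) • u3 with hm
    have haa : a ⬝ᵥ a = ρ ^ 2 := by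
      simp only [ha, dotProduct_add, add_dotProduct, dotProduct_smul, smul_dotProduct, h11, h13,
        h31, h33, smul_eq_mul]
      field_simp
      linear_combination t ^ 2 * hp2 + κ ^ 2 * s ^ 2 * hq2 + s ^ 2 * (t ^ 2 - 1) * hκ2 - hd2
    have ham : 1 + a ⬝ᵥ m = s * t := by
      simp only [ha, hm, dotProduct_add, add_dotProduct, dotProduct_smul, smul_dotProduct, h11,
        h13, h31, h33, smul_eq_mul]
      field_simp
      linear_combination (1 - s * t) * hd2 - t * (t - s) * hp2 + κ ^ 2 * s * (t - s) * hq2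
        + s * (t - s) * (t ^ 2 - 1) * hκ2
    have hA : (1 + vecMulVec a m)ᵀ * (1 + vecMulVec a m) = C := by
      apply eq_of_mulVec_eq_of_orthonormal h11 h22 h33 h12 h13 h23
      · have ha1 : a ⬝ᵥ u1 = ρ * (t * p / d) := by
          simp [ha, add_dotProduct, h11, h31]
        have hm1 : m ⬝ᵥ u1 = (t - s) / (ρ * d) * -p := by
          simp [hm, add_dotProduct, h11, h31]
        rw [transpose_mul_self_one_add_vecMulVec_mulVec, haa, hCu1, ha1, hm1]
        ext i
        simp only [ha, hm, Pi.add_apply, Pi.smul_apply, smul_eq_mul]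
        field_simp
        linear_combination (s ^ 2 - t ^ 2) * u1 i * hp2 + (1 - s ^ 2) * u1 i * hd2
      · rw [transpose_mul_self_one_add_vecMulVec_mulVec, hCu2]
        simp [ha, hm, add_dotProduct, h12, h32]
      · have ha3 : a ⬝ᵥ u3 = ρ * (κ * (s * q / d)) := by
          simp [ha, add_dotProduct, h33, h13]
        have hm3 : m ⬝ᵥ u3 = (t - s) / (ρ * d) * (κ * q) := by
          simp [hm, add_dotProduct, h33, h13]
        rw [transpose_mul_self_one_add_vecMulVec_mulVec, haa, hCu3, ha3, hm3]
        ext i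
        simp only [ha, hm, Pi.add_apply, Pi.smul_apply, smul_eq_mul]
        field_simp
        linear_combination (t ^ 2 - s ^ 2) * u3 i * (κ ^ 2 * hq2 + (t ^ 2 - 1) * hκ2)
          + (1 - t ^ 2) * u3 i * hd2
    have hdet : 0 < ((1 + vecMulVec a m) * G).det := by
      rw [det_mul, det_one_add_vecMulVec_eq, ham]
      positivity
    obtain ⟨Q, hQ, hQF⟩ := exists_SO3_mul_eq hF hdet (by
      rw [← hGCG, ← hA, transpose_mul]
      simp only [mul_assoc])
    exact ⟨Q, hQ, by rw [hQF, ← hadd, add_sub_cancel_left]⟩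
  · rintro Q a n ⟨hQ, hQdet⟩ hQF
    obtain ⟨m, rfl⟩ : ∃ m, n = Gᵀ *ᵥ m := by
      refine ⟨Gᵀ⁻¹ *ᵥ n, ?_⟩
      rw [mulVec_mulVec, mul_nonsing_inv _ (by rwa [det_transpose]), one_mulVec]
    have hAG : (1 + vecMulVec a m) * G = Q * F := by
      rw [← hadd, ← hQF, add_sub_cancel]
    have hAQ : 1 + vecMulVec a m = Q * (F * G⁻¹) := by
      rw [← mul_assoc, ← hAG, mul_nonsing_inv_cancel_right _ _ hGu]
    have hA : (1 + vecMulVec a m)ᵀ * (1 + vecMulVec a m) = C := by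
      rw [hAQ, hCH, transpose_mul Q, mul_assoc, ← mul_assoc Qᵀ, hQ, one_mul]
    have hpos : 0 < 1 + a ⬝ᵥ m := by
      have := congrArg det hAG
      rw [det_mul, det_mul, hQdet, one_mul, det_one_add_vecMulVec_eq] at this
      exact pos_of_mul_pos_left (this ▸ hF) hG.le
    have expand := eq_sum_dotProduct_smul_of_orthonormal h11 h22 h33 h12 h13 h23
    have hdot (v w : V3) : v ⬝ᵥ w =
        (u1 ⬝ᵥ v) * (u1 ⬝ᵥ w) + (u2 ⬝ᵥ v) * (u2 ⬝ᵥ w) + (u3 ⬝ᵥ v) * (u3 ⬝ᵥ w) := by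
      conv_lhs => rw [expand v]
      simp only [add_dotProduct, smul_dotProduct, smul_eq_mul]
    have entry (v w : V3) : w ⬝ᵥ (C *ᵥ v) = w ⬝ᵥ v + (v ⬝ᵥ m) * (w ⬝ᵥ a) +
        (v ⬝ᵥ a + (a ⬝ᵥ a) * (v ⬝ᵥ m)) * (w ⬝ᵥ m) := by
      rw [← hA, transpose_mul_self_one_add_vecMulVec_mulVec]
      simp only [dotProduct_add, dotProduct_smul, smul_eq_mul, dotProduct_comm m v,
        dotProduct_comm a v]
    have e11 := entry u1 u1
    have e22 := entry u2 u2
    have e33 := entry u3 u3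
    have e12 := entry u1 u2
    have e13 := entry u1 u3
    have e23 := entry u2 u3
    simp only [hCu1, hCu2, hCu3, dotProduct_smul, h11, h22, h33, h21, h31, h32, smul_eq_mul]
      at e11 e22 e33 e12 e13 e23
    obtain ⟨ha2, hm2, κ, ρ, hκ, hρ, ha1, ha3, hm1, hm3⟩ :=
      coordinates_of_twin (a1 := u1 ⬝ᵥ a) (a2 := u2 ⬝ᵥ a) (a3 := u3 ⬝ᵥ a) (m1 := u1 ⬝ᵥ m)
        (m2 := u2 ⬝ᵥ m) (m3 := u3 ⬝ᵥ m) (E := a ⬝ᵥ a) hs ht hst hd hp2 hq2 hd2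
        (by rw [hdot a a]; ring) (by linear_combination -e11 - hs2) (by linear_combination -e22)
        (by linear_combination -e33 - ht2) (by linear_combination -e12)
        (by linear_combination -e13) (by linear_combination -e23) (by rwa [hdot a m] at hpos)
    refine ⟨κ, ρ, hκ, hρ, ?_, ?_⟩
    · rw [aSol_eq hl1pos.le hl1 hl3, ← ha1, ← ha3]
      conv_lhs => rw [expand a, ha2, zero_smul, add_zero]
    · rw [nSol_eq, ← hm1, ← hm3]
      conv_lhs => rw [expand m, hm2, zero_smul, add_zero]
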